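/- Let A ∈ ℝ^{m×n} with k + 1 ≤ min(m,n) be partitioned in blocks A = [[A11, A12],[A21, A22]] with A11 ∈ ℝ^{k×k} invertible, and let A_k = [[A11, A12],[A21, A21·A11⁻¹·A12]] be the rank-k approximant of the partial LU factorization. Suppose that for some μ ≥ 1 and ν ≥ 1: (1) (1/μ)·σ_j(A) ≤ σ_j(A_k) ≤ μ·σ_j(A) for 1 ≤ j ≤ k and σ_{k+j}(A) ≤ σ_j(A − A_k) ≤ μ·σ_{k+j}(A) for 1 ≤ j ≤ min(m,n) − k; and (2) ‖A21A11⁻¹‖_max ≤ ν and ‖A11⁻¹A12‖_max ≤ ν. Then for every k×k submatrix Â11 of A that differs from A11 in at most one row and at most one column, vol(Â11) ≤ (ν² + μ²·(1 + √(k(m−k))·ν)·(1 + √(k(n−k))·ν))·vol(A11). -/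

import Mathlib

open Matrix

/-- The spectral norm (`‖·‖₂`, largest singular value) of a real matrix. -/
noncomputable def specNorm {m n : Type*} [Fintype m] [Fintype n] [DecidableEq n]
    (A : Matrix m n ℝ) : ℝ :=
  ‖LinearMap.toContinuousLinearMap (Matrix.toEuclideanLin A)‖

/-- `sval A j` is the `j`-th largest singular value of `A` (1-indexed), characterized as the
distance, in the spectral norm, from `A` to the set of matrices of rank `< j`. -/
noncomputable def sval {m n : Type*} [Fintype m] [Fintype n] [DecidableEq n]
    (A : Matrix m n ℝ) (j : ℕ) : ℝ :=
  sInf {x : ℝ | ∃ B : Matrix m n ℝ, B.rank < j ∧ x = specNorm (A - B)}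

/-- The volume of a matrix: the product of its singular values. -/
noncomputable def vol {m n : Type*} [Fintype m] [Fintype n] [DecidableEq n]
    (A : Matrix m n ℝ) : ℝ :=
  ∏ j ∈ Finset.Icc 1 (min (Fintype.card m) (Fintype.card n)), sval A j

/-- `DiffOne b r` : `r` is an injective selection of indices whose image (index set)
differs from the index set selected by `b` in at most one element. -/
def DiffOne {ι α : Type*} [Fintype ι] [DecidableEq α] (b r : ι → α) : Prop :=
  Function.Injective r ∧ (Finset.univ.image r \ Finset.univ.image b).card ≤ 1

lemma le_of_sq_le_sq' {a b : ℝ} (h : a ^ 2 ≤ b ^ 2) (hb : 0 ≤ b) : a ≤ b :=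
  (abs_le_of_sq_le_sq' h hb).2

section EY
variable {k : ℕ}
local notation "EE" => EuclideanSpace ℝ (Fin k)

lemma norm_sq_apply (T : EE →ₗ[ℝ] EE) (hn : Module.finrank ℝ EE = k) (x : EE) :
    ‖T x‖ ^ 2 = ∑ l : Fin k, T.singularValues l ^ 2 *
      (inner ℝ (T.isSymmetric_adjoint_comp_self.eigenvectorBasis hn l) x) ^ 2 := by
  set b := T.isSymmetric_adjoint_comp_self.eigenvectorBasis hn with hb
  have h1 : ‖T x‖ ^ 2 = inner ℝ x ((LinearMap.adjoint T ∘ₗ T) x) := by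
    rw [LinearMap.comp_apply, LinearMap.adjoint_inner_right, real_inner_self_eq_norm_sq]
  rw [h1, ← b.sum_inner_mul_inner]
  refine Finset.sum_congr rfl fun l _ => ?_
  have h2 := T.isSymmetric_adjoint_comp_self (b l) x
  rw [← h2, hb, LinearMap.IsSymmetric.apply_eigenvectorBasis, inner_smul_left, ← hb,
    T.sq_singularValues_fin hn, real_inner_comm]
  simp
  ring

lemma norm_sq_eq (b : OrthonormalBasis (Fin k) ℝ EE) (x : EE) :
    ‖x‖ ^ 2 = ∑ l, (inner ℝ (b l) x) ^ 2 := by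
  rw [← real_inner_self_eq_norm_sq, ← b.sum_inner_mul_inner]
  refine Finset.sum_congr rfl fun l _ => ?_
  rw [real_inner_comm]; ring

lemma rank_eq (B : Matrix (Fin k) (Fin k) ℝ) :
    B.rank = Module.finrank ℝ (LinearMap.range (Matrix.toEuclideanLin B)) := by
  rw [Matrix.toEuclideanLin_eq_toLin]
  exact Matrix.rank_eq_finrank_range_toLin _ _ _

lemma sval_le {m n : Type*} [Fintype m] [Fintype n] [DecidableEq n]
    (A B : Matrix m n ℝ) (j : ℕ) (h : B.rank < j) : sval A j ≤ specNorm (A - B) :=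
  csInf_le ⟨0, by rintro _ ⟨C, _, rfl⟩; exact norm_nonneg _⟩ ⟨B, h, rfl⟩

lemma le_sval {m n : Type*} [Fintype m] [Fintype n] [DecidableEq n]
    (A : Matrix m n ℝ) (j : ℕ) (hj : 1 ≤ j) (x : ℝ)
    (h : ∀ B : Matrix m n ℝ, B.rank < j → x ≤ specNorm (A - B)) : x ≤ sval A j := by
  refine le_csInf ⟨_, 0, by rw [Matrix.rank_zero]; omega, rfl⟩ ?_
  rintro _ ⟨B, hB, rfl⟩
  exact h B hB

lemma sval_eq (M : Matrix (Fin k) (Fin k) ℝ) (i : Fin k) :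
    sval M (i + 1) = (Matrix.toEuclideanLin M).singularValues i := by
  set T := Matrix.toEuclideanLin M with hT
  have hn : Module.finrank ℝ EE = k := by simp
  set b := T.isSymmetric_adjoint_comp_self.eigenvectorBasis hn with hb
  have hanti : Antitone T.singularValues := T.singularValues_antitone
  apply le_antisymm
  · set s : Finset (Fin k) := Finset.Iio i with hs
    let P : EE →ₗ[ℝ] EE := ∑ l ∈ s, (innerₛₗ ℝ (b l)).smulRight (b l)
    have hP : ∀ x l, inner ℝ (b l) (x - P x) = if l < i then 0 else inner ℝ (b l) x := by
      intro x l
      simp [P, inner_sub_right, inner_sum, inner_smul_right, b.inner_eq_ite, hs]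
      split_ifs <;> simp
    have hPr : Module.finrank ℝ (LinearMap.range P) ≤ i := by
      have h1 : LinearMap.range P ≤ Submodule.span ℝ ((s.image b : Finset EE) : Set EE) := by
        rintro _ ⟨x, rfl⟩
        simp only [P, LinearMap.sum_apply]
        refine Submodule.sum_mem _ fun l hl => ?_
        refine Submodule.smul_mem _ _ (Submodule.subset_span ?_)
        exact Finset.mem_coe.2 (Finset.mem_image_of_mem _ hl)
      refine (Submodule.finrank_mono h1).trans ((finrank_span_finset_le_card _).trans
        (Finset.card_image_le.trans ?_))
      rw [hs, Fin.card_Iio]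
    let B := Matrix.toEuclideanLin.symm (T ∘ₗ P)
    have hB : Matrix.toEuclideanLin B = T ∘ₗ P := by simp [B]
    refine (sval_le M B _ ?_).trans ?_
    · rw [rank_eq, hB]
      refine Nat.lt_succ_of_le (le_trans ?_ hPr)
      rw [LinearMap.range_comp]
      exact Submodule.finrank_map_le _ _
    · refine ContinuousLinearMap.opNorm_le_bound _ (T.singularValues_nonneg _) fun x => ?_
      have : (Matrix.toEuclideanLin (M - B)) x = T (x - P x) := by
        simp [hB, ← hT]
      simp only [LinearMap.coe_toContinuousLinearMap', this]
      refine le_of_sq_le_sq' ?_ (mul_nonneg (T.singularValues_nonneg _) (norm_nonneg _))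
      rw [norm_sq_apply T hn, mul_pow, norm_sq_eq b, Finset.mul_sum]
      refine Finset.sum_le_sum fun l _ => ?_
      rw [← hb, hP]
      split_ifs with hl
      · simp; positivity
      · have := hanti (show (i : ℕ) ≤ l by simpa using hl)
        have := T.singularValues_nonneg l
        gcongr
  · refine le_sval _ _ (by simp) _ fun B hB => ?_
    rw [rank_eq] at hB
    set s : Finset (Fin k) := Finset.Iic i with hs
    let W : Submodule ℝ EE := Submodule.span ℝ (Set.range fun l : s => b l)
    have hW : Module.finrank ℝ W = i + 1 := by
      have := finrank_span_eq_card (R := ℝ)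
        (b.orthonormal.linearIndependent.comp (fun l : s => (l : Fin k)) Subtype.val_injective)
      refine this.trans ?_
      rw [Fintype.card_coe, hs, Fin.card_Iic]
    set K := LinearMap.ker (Matrix.toEuclideanLin B)
    have hK : Module.finrank ℝ _ + Module.finrank ℝ K = _ :=
      LinearMap.finrank_range_add_finrank_ker (Matrix.toEuclideanLin B)
    have h3 := Submodule.finrank_sup_add_finrank_inf_eq W K
    have h4 := Submodule.finrank_le (W ⊔ K)
    rw [hn] at hK h4
    have h5 : 0 < Module.finrank ℝ (W ⊓ K : Submodule ℝ EE) := by omega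
    have : Nontrivial (W ⊓ K : Submodule ℝ EE) := Module.nontrivial_of_finrank_pos h5
    obtain ⟨x, hx, hx0⟩ := Submodule.exists_mem_ne_zero_of_ne_bot
      ((Submodule.nontrivial_iff_ne_bot).1 this)
    have hxK : Matrix.toEuclideanLin B x = 0 := hx.2
    have hxW : ∀ l, ¬ l ≤ i → inner ℝ (b l) x = 0 := by
      intro l hl
      have : W ≤ (ℝ ∙ (b l))ᗮ := by
        refine Submodule.span_le.2 ?_
        rintro _ ⟨⟨p, hp⟩, rfl⟩
        refine Submodule.mem_orthogonal_singleton_iff_inner_right.2 ?_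
        have : l ≠ p := by rintro rfl; exact hl (by simpa [hs] using hp)
        simp [b.inner_eq_ite, this]
      exact Submodule.mem_orthogonal_singleton_iff_inner_right.1 (this hx.1)
    have h6 : T.singularValues i * ‖x‖ ≤ ‖T x‖ := by
      refine le_of_sq_le_sq' ?_ (norm_nonneg _)
      rw [norm_sq_apply T hn, mul_pow, norm_sq_eq b, Finset.mul_sum]
      refine Finset.sum_le_sum fun l _ => ?_
      rw [← hb]
      by_cases hl : l ≤ i
      · have := hanti (show (l : ℕ) ≤ i by simpa using hl)
        have := T.singularValues_nonneg i
        gcongr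
      · simp [hxW l hl]
    have h7 := (LinearMap.toContinuousLinearMap (Matrix.toEuclideanLin (M - B))).le_opNorm x
    have h8 : Matrix.toEuclideanLin (M - B) x = T x := by simp [hxK, hT]
    rw [LinearMap.coe_toContinuousLinearMap', h8] at h7
    exact le_of_mul_le_mul_right (h6.trans h7) (norm_pos_iff.2 hx0)

lemma vol_eq (M : Matrix (Fin k) (Fin k) ℝ) : vol M = |M.det| := by
  have h1 : |M.det| = (Matrix.toEuclideanLin M).normDet := by
    rw [LinearMap.normDet_eq_abs_det, Matrix.toEuclideanLin_eq_toLin, LinearMap.det_toLin]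
  rw [h1, LinearMap.normDet_eq_prod_singularValues, vol]
  simp only [Fintype.card_fin, min_self, finrank_euclideanSpace]
  rw [Finset.prod_range, ← Finset.Ico_add_one_right_eq_Icc, Finset.prod_Ico_eq_prod_range]
  simp only [Nat.add_sub_cancel]
  rw [Finset.prod_range]
  refine Finset.prod_congr rfl fun i _ => ?_
  rw [← sval_eq, add_comm]

end EY

section DET
variable {k m' n' : ℕ}

lemma det_one_updateRow (a : Fin k) (x : Fin k → ℝ) :
    ((1 : Matrix (Fin k) (Fin k) ℝ).updateRow a x).det = x a := by
  have := Matrix.cramer_transpose_apply (1 : Matrix (Fin k) (Fin k) ℝ) x a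
  rw [← this]; simp

lemma det_one_updateCol (a : Fin k) (x : Fin k → ℝ) :
    ((1 : Matrix (Fin k) (Fin k) ℝ).updateCol a x).det = x a := by
  rw [← Matrix.cramer_apply]; simp

lemma adj_updateRow (a : Fin k) (x : Fin k → ℝ) (c : Fin k) :
    ((1 : Matrix (Fin k) (Fin k) ℝ).updateRow a x).adjugate c a = if c = a then 1 else 0 := by
  rw [Matrix.adjugate_apply, Matrix.updateRow_idem, det_one_updateRow]
  simp [Pi.single_apply, eq_comm]

lemma adj_updateCol (b : Fin k) (y : Fin k → ℝ) (c : Fin k) :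
    ((1 : Matrix (Fin k) (Fin k) ℝ).updateCol b y).adjugate b c = if c = b then 1 else 0 := by
  have h : ((1 : Matrix (Fin k) (Fin k) ℝ).updateCol b y)
      = ((1 : Matrix (Fin k) (Fin k) ℝ).updateRow b y)ᵀ := by
    rw [← Matrix.updateCol_transpose, Matrix.transpose_one]
  rw [h, ← Matrix.adjugate_transpose, Matrix.transpose_apply, adj_updateRow]

lemma adj_main (M : Matrix (Fin k) (Fin k) ℝ) (a b : Fin k) (x y : Fin k → ℝ) :
    ((1 : Matrix (Fin k) (Fin k) ℝ).updateRow a x * M *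
      (1 : Matrix (Fin k) (Fin k) ℝ).updateCol b y).adjugate b a = M.adjugate b a := by
  rw [Matrix.adjugate_mul_distrib, Matrix.adjugate_mul_distrib, Matrix.mul_apply]
  simp [Matrix.mul_apply, adj_updateRow, adj_updateCol]

lemma det_add_entry (M : Matrix (Fin k) (Fin k) ℝ) (a b : Fin k) (s : ℝ) :
    (M + Matrix.single a b s).det = M.det + s * M.adjugate b a := by
  have : M + Matrix.single a b s = M.updateRow a (M a + s • Pi.single b 1) := by
    ext i j
    by_cases hi : i = a
    · subst hi
      by_cases hj : j = b
      · subst hj; simp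
      · simp [hj, Ne.symm hj]
    · simp [hi, Ne.symm hi]
  rw [this, Matrix.det_updateRow_add, Matrix.det_updateRow_smul, Matrix.adjugate_apply,
    Matrix.updateRow_eq_self]

/-- Key determinant identity. -/
lemma det_swap (A11 : Matrix (Fin k) (Fin k) ℝ) (A12 : Matrix (Fin k) (Fin n') ℝ)
    (A21 : Matrix (Fin m') (Fin k) ℝ) (A22 : Matrix (Fin m') (Fin n') ℝ)
    (hinv : IsUnit A11.det) (a b : Fin k) (i : Fin m') (j : Fin n') :
    ((Matrix.fromBlocks A11 A12 A21 A22).submatrix (Function.update Sum.inl a (Sum.inr i))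
      (Function.update Sum.inl b (Sum.inr j))).det =
    A11.det * ((A21 * A11⁻¹) i a * (A11⁻¹ * A12) b j +
      (A22 - A21 * A11⁻¹ * A12) i j * A11⁻¹ b a) := by
  have hX : A21 * A11⁻¹ * A11 = A21 := by
    rw [Matrix.mul_assoc, Matrix.nonsing_inv_mul _ hinv, Matrix.mul_one]
  have hY : A11 * (A11⁻¹ * A12) = A12 := by
    rw [← Matrix.mul_assoc, Matrix.mul_nonsing_inv _ hinv, Matrix.one_mul]
  set X := A21 * A11⁻¹ with hXd
  set Y := A11⁻¹ * A12 with hYd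
  have hadj : A11.adjugate b a = A11.det * A11⁻¹ b a := by
    rw [Matrix.inv_def, Matrix.smul_apply, smul_eq_mul, Ring.inverse_eq_inv',
      mul_inv_cancel_left₀ hinv.ne_zero]
  have key : (Matrix.fromBlocks A11 A12 A21 A22).submatrix
      (Function.update Sum.inl a (Sum.inr i)) (Function.update Sum.inl b (Sum.inr j)) =
      (1 : Matrix (Fin k) (Fin k) ℝ).updateRow a (X i) * A11 *
        (1 : Matrix (Fin k) (Fin k) ℝ).updateCol b (fun l => Y l j) +
      Matrix.single a b ((A22 - X * A12) i j) := by
    have e1 : (1 : Matrix (Fin k) (Fin k) ℝ).updateRow a (X i) * A11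
        = A11.updateRow a (A21 i) := by
      ext p q
      by_cases hp : p = a
      · subst hp
        conv_rhs => rw [← hX]
        simp [Matrix.mul_apply]
      · simp [Matrix.mul_apply, hp, Matrix.one_apply]
    have e2 : ∀ (M : Matrix (Fin k) (Fin k) ℝ) p q,
        (M * (1 : Matrix (Fin k) (Fin k) ℝ).updateCol b (fun l => Y l j)) p q =
        if q = b then ∑ l, M p l * Y l j else M p q := by
      intro M p q
      split_ifs with hq
      · subst hq; simp [Matrix.mul_apply]
      · simp [Matrix.mul_apply, hq, Matrix.one_apply]
    ext p q
    rw [Matrix.add_apply, e1, e2]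
    have hA12 : ∀ p, A12 p j = ∑ l, A11 p l * Y l j := by
      intro p; conv_lhs => rw [← hY]
      rfl
    have hXA : (X * A12) i j = ∑ l, A21 i l * Y l j := by
      conv_lhs => rw [← hY, ← Matrix.mul_assoc, hX]
      rfl
    by_cases hp : p = a <;> by_cases hq : q = b
    · subst hp; subst hq; simp [hXA]
    · subst hp; simp [hq, Ne.symm hq]
    · subst hq; simp [hp, Ne.symm hp, hA12]
    · simp [hp, hq, Ne.symm hp]
  rw [key, det_add_entry, adj_main, hadj, Matrix.det_mul, Matrix.det_mul, det_one_updateRow,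
    det_one_updateCol]
  ring

lemma det_swap_row (A11 : Matrix (Fin k) (Fin k) ℝ) (A12 : Matrix (Fin k) (Fin n') ℝ)
    (A21 : Matrix (Fin m') (Fin k) ℝ) (A22 : Matrix (Fin m') (Fin n') ℝ)
    (hinv : IsUnit A11.det) (a : Fin k) (i : Fin m') :
    ((Matrix.fromBlocks A11 A12 A21 A22).submatrix (Function.update Sum.inl a (Sum.inr i))
      Sum.inl).det = A11.det * (A21 * A11⁻¹) i a := by
  have hX : A21 * A11⁻¹ * A11 = A21 := by
    rw [Matrix.mul_assoc, Matrix.nonsing_inv_mul _ hinv, Matrix.mul_one]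
  set X := A21 * A11⁻¹ with hXd
  have e1 : (Matrix.fromBlocks A11 A12 A21 A22).submatrix
      (Function.update Sum.inl a (Sum.inr i)) Sum.inl =
      (1 : Matrix (Fin k) (Fin k) ℝ).updateRow a (X i) * A11 := by
    ext p q
    by_cases hp : p = a
    · subst hp
      conv_lhs => rw [← hX]
      simp [Matrix.mul_apply]
    · simp [Matrix.mul_apply, hp, Matrix.one_apply]
  rw [e1, Matrix.det_mul, det_one_updateRow]; ring

lemma det_swap_col (A11 : Matrix (Fin k) (Fin k) ℝ) (A12 : Matrix (Fin k) (Fin n') ℝ)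
    (A21 : Matrix (Fin m') (Fin k) ℝ) (A22 : Matrix (Fin m') (Fin n') ℝ)
    (hinv : IsUnit A11.det) (b : Fin k) (j : Fin n') :
    ((Matrix.fromBlocks A11 A12 A21 A22).submatrix Sum.inl
      (Function.update Sum.inl b (Sum.inr j))).det = A11.det * (A11⁻¹ * A12) b j := by
  have hY : A11 * (A11⁻¹ * A12) = A12 := by
    rw [← Matrix.mul_assoc, Matrix.mul_nonsing_inv _ hinv, Matrix.one_mul]
  set Y := A11⁻¹ * A12 with hYd
  have e1 : (Matrix.fromBlocks A11 A12 A21 A22).submatrix Sum.inl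
      (Function.update Sum.inl b (Sum.inr j)) =
      A11 * (1 : Matrix (Fin k) (Fin k) ℝ).updateCol b (fun l => Y l j) := by
    ext p q
    by_cases hq : q = b
    · subst hq
      conv_lhs => rw [← hY]
      simp [Matrix.mul_apply]
    · simp [Matrix.mul_apply, hq, Matrix.one_apply]
  rw [e1, Matrix.det_mul, det_one_updateCol]

lemma diffOne_perm (r : Fin k → Fin k ⊕ Fin m') (h : DiffOne Sum.inl r) :
    ∃ π : Equiv.Perm (Fin k), r ∘ π = Sum.inl ∨
      ∃ a i, r ∘ π = Function.update Sum.inl a (Sum.inr i) := by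
  obtain ⟨hinj, hc⟩ := h
  by_cases hall : ∀ p, ∃ q, r p = Sum.inl q
  · choose g hg using hall
    have hgi : Function.Injective g := fun x y hxy => hinj (by rw [hg, hg, hxy])
    let e := Equiv.ofBijective g (Finite.injective_iff_bijective.1 hgi)
    refine ⟨e.symm, Or.inl ?_⟩
    ext1 x
    have : g (e.symm x) = x := e.apply_symm_apply x
    simp [hg, this]
  · push Not at hall
    obtain ⟨p, hp⟩ := hall
    obtain ⟨i, hi⟩ : ∃ i, r p = Sum.inr i := by
      cases hrp : r p with
      | inl q => exact absurd hrp (hp q)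
      | inr i => exact ⟨i, rfl⟩
    have hmem : ∀ q l, r q = Sum.inr l →
        r q ∈ Finset.univ.image r \ Finset.univ.image Sum.inl := by
      intro q l hq
      refine Finset.mem_sdiff.2 ⟨Finset.mem_image_of_mem _ (Finset.mem_univ _), ?_⟩
      rw [hq]; simp
    have hother : ∀ q, q ≠ p → ∃ l, r q = Sum.inl l := by
      intro q hq
      cases hrq : r q with
      | inl l => exact ⟨l, rfl⟩
      | inr l =>
        exfalso
        have := Finset.card_le_one.1 hc (r q) (hmem q l hrq) (r p) (hmem p i hi)
        exact hq (hinj this)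
    let g : Fin k → Fin k := fun q => if hq : q ≠ p then (hother q hq).choose else q
    have hg : ∀ q, q ≠ p → r q = Sum.inl (g q) := by
      intro q hq
      simp only [g, hq, ne_eq, not_false_eq_true, dif_pos]
      exact (hother q hq).choose_spec
    have hgi : Set.InjOn g {q | q ≠ p} := by
      intro x hx y hy hxy
      exact hinj (by rw [hg x hx, hg y hy, hxy])
    obtain ⟨e, he⟩ := Set.MapsTo.exists_equiv_extend_of_card_eq
      (t := (Finset.univ : Finset (Fin k))) (by simp) (s := {q | q ≠ p}) (f := g)
      (fun _ _ => by simp) hgi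
    let e' : Fin k ≃ Fin k := e.trans (Equiv.subtypeUnivEquiv (by simp))
    have he' : ∀ q, q ≠ p → g q = e' q := fun q hq => (he q hq).symm
    refine ⟨e'.symm, Or.inr ⟨e' p, i, ?_⟩⟩
    ext1 x
    obtain ⟨y, rfl⟩ := e'.surjective x
    by_cases hy : y = p
    · subst hy; simp [hi]
    · have : e' y ≠ e' p := fun h => hy (e'.injective h)
      simp [this, hg y hy, he' y hy]

lemma abs_det_perm (M : Matrix (Fin k ⊕ Fin m') (Fin k ⊕ Fin n') ℝ)
    (r : Fin k → Fin k ⊕ Fin m') (c : Fin k → Fin k ⊕ Fin n') (π ρ : Equiv.Perm (Fin k)) :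
    |(M.submatrix (r ∘ π) (c ∘ ρ)).det| = |(M.submatrix r c).det| := by
  rw [← Matrix.submatrix_submatrix]
  exact Matrix.abs_det_submatrix_equiv_equiv _ _ _

end DET

section NORM
variable {k m' n' : ℕ}

open scoped Matrix.Norms.L2Operator in
lemma specNorm_mul_le {l m n : Type*} [Fintype l] [Fintype m] [Fintype n] [DecidableEq m]
    [DecidableEq n] (A : Matrix l m ℝ) (B : Matrix m n ℝ) :
    specNorm (A * B) ≤ specNorm A * specNorm B :=
  Matrix.l2_opNorm_mul A B

open scoped Matrix.Norms.L2Operator in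
lemma specNorm_transpose {m n : Type*} [Fintype m] [Fintype n] [DecidableEq m]
    [DecidableEq n] (A : Matrix m n ℝ) : specNorm Aᵀ = specNorm A := by
  have := Matrix.l2_opNorm_conjTranspose A
  rwa [Matrix.conjTranspose_eq_transpose_of_trivial] at this

lemma specNorm_nonneg {m n : Type*} [Fintype m] [Fintype n]
    [DecidableEq n] (A : Matrix m n ℝ) : 0 ≤ specNorm A := norm_nonneg _

lemma specNorm_le {m n : Type*} [Fintype m] [Fintype n]
    [DecidableEq n] (A : Matrix m n ℝ) (c : ℝ) (hc : 0 ≤ c)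
    (h : ∀ v : n → ℝ, ∑ i, (A *ᵥ v) i ^ 2 ≤ c ^ 2 * ∑ j, v j ^ 2) : specNorm A ≤ c := by
  refine ContinuousLinearMap.opNorm_le_bound _ hc fun x => ?_
  refine le_of_sq_le_sq' ?_ (mul_nonneg hc (norm_nonneg _))
  rw [mul_pow, EuclideanSpace.norm_sq_eq, EuclideanSpace.norm_sq_eq]
  simpa using h x.ofLp

lemma entry_le_specNorm {m n : Type*} [Fintype m] [Fintype n]
    [DecidableEq n] (A : Matrix m n ℝ) (i : m) (j : n) : |A i j| ≤ specNorm A := by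
  have h := (LinearMap.toContinuousLinearMap (Matrix.toEuclideanLin A)).le_opNorm
    (EuclideanSpace.single j 1)
  have h2 := PiLp.norm_apply_le
    ((LinearMap.toContinuousLinearMap (Matrix.toEuclideanLin A)) (EuclideanSpace.single j 1)) i
  have h3 := h2.trans h
  simpa [specNorm] using h3

lemma specNorm_single_le (a b : Fin k) (t : ℝ) :
    specNorm (Matrix.single a b t) ≤ |t| := by
  refine specNorm_le _ _ (abs_nonneg _) fun v => ?_
  have : ∀ i, (Matrix.single a b t *ᵥ v) i ^ 2 = if i = a then (t * v b) ^ 2 else 0 := by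
    intro i
    split_ifs with h
    · subst h; simp [Matrix.mulVec, dotProduct, Matrix.single_apply]
    · simp [Matrix.mulVec, dotProduct, Ne.symm h]
  simp only [this, Finset.sum_ite_eq', Finset.mem_univ, if_true, sq_abs, mul_pow]
  gcongr
  exact Finset.single_le_sum (f := fun j => v j ^ 2) (fun _ _ => sq_nonneg _) (Finset.mem_univ b)

lemma specNorm_fromRows_le (X : Matrix (Fin m') (Fin k) ℝ) (ν : ℝ) (hν : 0 ≤ ν)
    (hX : ∀ i j, |X i j| ≤ ν) :
    specNorm (Matrix.fromRows (1 : Matrix (Fin k) (Fin k) ℝ) X) ≤ 1 + √(k * m') * ν := by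
  refine specNorm_le _ _ (by positivity) fun v => ?_
  rw [Fintype.sum_sum_type]
  have h1 : ∀ i, (X *ᵥ v) i ^ 2 ≤ (k * ν ^ 2) * ∑ j, v j ^ 2 := by
    intro i
    refine (Finset.sum_mul_sq_le_sq_mul_sq Finset.univ (X i) v).trans ?_
    gcongr
    calc ∑ j, X i j ^ 2 ≤ ∑ j : Fin k, ν ^ 2 :=
          Finset.sum_le_sum fun j _ => sq_le_sq' (abs_le.1 (hX i j)).1 (abs_le.1 (hX i j)).2
      _ = k * ν ^ 2 := by simp
  have h2 : ∑ i, (X *ᵥ v) i ^ 2 ≤ (k * m' * ν ^ 2) * ∑ j, v j ^ 2 := by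
    refine (Finset.sum_le_sum fun i _ => h1 i).trans (le_of_eq ?_)
    simp; ring
  have h3 : √((k : ℝ) * m') ^ 2 = k * m' := Real.sq_sqrt (by positivity)
  have h4 : 0 ≤ √((k : ℝ) * m') * ν := by positivity
  have h5 : 0 ≤ ∑ j, v j ^ 2 := Finset.sum_nonneg fun _ _ => sq_nonneg _
  simp only [Matrix.fromRows_mulVec, Sum.elim_inl, Sum.elim_inr, Matrix.one_mulVec]
  have h6 : (1 + √((k : ℝ) * m') * ν) ^ 2 = 1 + k * m' * ν ^ 2 + 2 * (√((k : ℝ) * m') * ν) := by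
    linear_combination ν ^ 2 * h3
  rw [h6]
  nlinarith [mul_nonneg h4 h5]

lemma specNorm_fromCols_le (Y : Matrix (Fin k) (Fin n') ℝ) (ν : ℝ) (hν : 0 ≤ ν)
    (hY : ∀ i j, |Y i j| ≤ ν) :
    specNorm (Matrix.fromCols (1 : Matrix (Fin k) (Fin k) ℝ) Y) ≤ 1 + √(k * n') * ν := by
  rw [← specNorm_transpose, Matrix.transpose_fromCols, Matrix.transpose_one]
  exact specNorm_fromRows_le _ _ hν fun i j => hY j i

lemma rank_lt_of_det (B : Matrix (Fin k) (Fin k) ℝ) (h : B.det = 0) : B.rank < k := by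
  obtain ⟨v, hv, hv0⟩ := Matrix.exists_mulVec_eq_zero_iff.2 h
  have h1 := LinearMap.finrank_range_add_finrank_ker B.mulVecLin
  have h2 : 0 < Module.finrank ℝ (LinearMap.ker B.mulVecLin) := by
    rw [Module.finrank_pos_iff_exists_ne_zero]
    exact ⟨⟨v, by simpa using hv0⟩, by simpa [Subtype.ext_iff] using hv⟩
  rw [Module.finrank_fin_fun] at h1
  rw [Matrix.rank]
  omega

lemma sval_Ak_le (A11 : Matrix (Fin k) (Fin k) ℝ) (A12 : Matrix (Fin k) (Fin n') ℝ)
    (A21 : Matrix (Fin m') (Fin k) ℝ) (hinv : IsUnit A11.det) (ν : ℝ) (hν : 0 ≤ ν)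
    (h3a : ∀ i j, |(A21 * A11⁻¹) i j| ≤ ν) (h3b : ∀ i j, |(A11⁻¹ * A12) i j| ≤ ν)
    (a b : Fin k) :
    sval (Matrix.fromBlocks A11 A12 A21 (A21 * A11⁻¹ * A12)) k * |A11⁻¹ b a| ≤
      (1 + √(k * m') * ν) * (1 + √(k * n') * ν) := by
  by_cases hβ : A11⁻¹ b a = 0
  · rw [hβ]; simp; positivity
  set β := A11⁻¹ b a with hβd
  set L := Matrix.fromRows (1 : Matrix (Fin k) (Fin k) ℝ) (A21 * A11⁻¹) with hL
  set R := Matrix.fromCols (1 : Matrix (Fin k) (Fin k) ℝ) (A11⁻¹ * A12) with hR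
  have hX : A21 * A11⁻¹ * A11 = A21 := by
    rw [Matrix.mul_assoc, Matrix.nonsing_inv_mul _ hinv, Matrix.mul_one]
  have hY : A11 * (A11⁻¹ * A12) = A12 := by
    rw [← Matrix.mul_assoc, Matrix.mul_nonsing_inv _ hinv, Matrix.one_mul]
  have hfac : Matrix.fromBlocks A11 A12 A21 (A21 * A11⁻¹ * A12) = L * A11 * R := by
    rw [hL, hR, Matrix.fromRows_mul, Matrix.fromRows_mul_fromCols, hX, Matrix.one_mul, hY,
      Matrix.mul_one, Matrix.mul_one, Matrix.mul_assoc]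
  set B := A11 + Matrix.single a b (-β⁻¹) with hB
  have hadj : A11.adjugate b a = A11.det * β := by
    rw [hβd, Matrix.inv_def, Matrix.smul_apply, smul_eq_mul, Ring.inverse_eq_inv',
      mul_inv_cancel_left₀ hinv.ne_zero]
  have hBdet : B.det = 0 := by
    rw [hB, det_add_entry, hadj]
    field_simp; ring
  have hrank : (L * B * R).rank < k :=
    ((Matrix.rank_mul_le_left _ _).trans (Matrix.rank_mul_le_right _ _)).trans_lt
      (rank_lt_of_det B hBdet)
  have h1 := sval_le (L * A11 * R) _ k hrank
  have h2 : L * A11 * R - L * B * R = L * Matrix.single a b (β⁻¹) * R := by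
    rw [← Matrix.sub_mul, ← Matrix.mul_sub, hB]
    congr 2
    rw [sub_add_cancel_left, ← Matrix.single_neg, neg_neg]
  rw [h2] at h1
  have hLn := specNorm_fromRows_le _ ν hν h3a
  have hRn := specNorm_fromCols_le _ ν hν h3b
  have h3 : specNorm (L * Matrix.single a b (β⁻¹) * R) ≤
      (1 + √(k * m') * ν) * |β⁻¹| * (1 + √(k * n') * ν) := by
    refine (specNorm_mul_le _ _).trans ?_
    refine mul_le_mul ?_ hRn (specNorm_nonneg _) (by positivity)
    refine (specNorm_mul_le _ _).trans ?_
    exact mul_le_mul hLn (specNorm_single_le _ _ _) (specNorm_nonneg _) (by positivity)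
  rw [hfac]
  have hpos : 0 < |β| := abs_pos.2 hβ
  refine (mul_le_mul_of_nonneg_right (h1.trans h3) hpos.le).trans (le_of_eq ?_)
  rw [abs_inv]
  field_simp

lemma eq_zero_of_rank {m n : Type*} [Fintype m] [Fintype n] [DecidableEq n]
    (B : Matrix m n ℝ) (h : B.rank = 0) : B = 0 := by
  rw [Matrix.rank, Submodule.finrank_eq_zero, LinearMap.range_eq_bot] at h
  ext i j
  have := congrFun (LinearMap.congr_fun h (Pi.single j 1)) i
  simpa using this

end NORM

theorem statement_12 {k m' n' : ℕ} (hm : 1 ≤ m') (hn : 1 ≤ n')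
    (A11 : Matrix (Fin k) (Fin k) ℝ) (A12 : Matrix (Fin k) (Fin n') ℝ)
    (A21 : Matrix (Fin m') (Fin k) ℝ) (A22 : Matrix (Fin m') (Fin n') ℝ)
    (hinv : IsUnit A11.det)
    (μ ν : ℝ) (hμ : 1 ≤ μ) (hν : 1 ≤ ν)
    (h1 : ∀ j : ℕ, 1 ≤ j → j ≤ k →
      (1 / μ) * sval (Matrix.fromBlocks A11 A12 A21 A22) j ≤
        sval (Matrix.fromBlocks A11 A12 A21 (A21 * A11⁻¹ * A12)) j ∧
      sval (Matrix.fromBlocks A11 A12 A21 (A21 * A11⁻¹ * A12)) j ≤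
        μ * sval (Matrix.fromBlocks A11 A12 A21 A22) j)
    (h2 : ∀ j : ℕ, 1 ≤ j → j ≤ min (k + m') (k + n') - k →
      sval (Matrix.fromBlocks A11 A12 A21 A22) (k + j) ≤
        sval (Matrix.fromBlocks A11 A12 A21 A22
              - Matrix.fromBlocks A11 A12 A21 (A21 * A11⁻¹ * A12)) j ∧
      sval (Matrix.fromBlocks A11 A12 A21 A22
              - Matrix.fromBlocks A11 A12 A21 (A21 * A11⁻¹ * A12)) j ≤
        μ * sval (Matrix.fromBlocks A11 A12 A21 A22) (k + j))
    (h3a : ∀ i j, |(A21 * A11⁻¹) i j| ≤ ν)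
    (h3b : ∀ i j, |(A11⁻¹ * A12) i j| ≤ ν) :
    ∀ (r : Fin k → Fin k ⊕ Fin m') (c : Fin k → Fin k ⊕ Fin n'),
      DiffOne Sum.inl r → DiffOne Sum.inl c →
      vol ((Matrix.fromBlocks A11 A12 A21 A22).submatrix r c) ≤
        (ν ^ 2 + μ ^ 2 * (1 + Real.sqrt (k * m') * ν) * (1 + Real.sqrt (k * n') * ν)) *
          vol A11 := by
  intro r c hr hc
  rw [vol_eq, vol_eq]
  obtain ⟨π, hπ⟩ := diffOne_perm r hr
  obtain ⟨ρ, hρ⟩ := diffOne_perm c hc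
  rw [← abs_det_perm _ r c π ρ]
  set K := μ ^ 2 * (1 + √(k * m') * ν) * (1 + √(k * n') * ν) with hK
  have hK0 : 0 ≤ K := by positivity
  have hd := abs_nonneg A11.det
  have hνν : ν ≤ ν ^ 2 := by nlinarith
  have fin : ∀ x : ℝ, |x| ≤ ν ^ 2 + K → |A11.det * x| ≤ (ν ^ 2 + K) * |A11.det| := by
    intro x hx
    rw [abs_mul, mul_comm]
    exact mul_le_mul_of_nonneg_right hx hd
  rcases hπ with hπ | ⟨a, i, hπ⟩ <;> rcases hρ with hρ | ⟨b, j, hρ⟩ <;> rw [hπ, hρ]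
  · have : (Matrix.fromBlocks A11 A12 A21 A22).submatrix Sum.inl Sum.inl = A11 := by
      ext; simp
    rw [this]
    have := fin 1 (by rw [abs_one]; linarith)
    simpa using this
  · rw [det_swap_col _ _ _ _ hinv]
    exact fin _ (by linarith [h3b b j])
  · rw [det_swap_row _ _ _ _ hinv]
    exact fin _ (by linarith [h3a i a])
  · rw [det_swap _ _ _ _ hinv]
    refine fin _ ((abs_add_le _ _).trans (add_le_add ?_ ?_))
    · rw [abs_mul, sq]
      exact mul_le_mul (h3a i a) (h3b b j) (abs_nonneg _) (by linarith)
    · rw [abs_mul]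
      have hk : 1 ≤ k := by have := a.2; omega
      have e1 := (h2 1 le_rfl (by omega)).2
      have e2 := (h1 k hk le_rfl).1
      have e3 : sval (Matrix.fromBlocks A11 A12 A21 A22) (k + 1) ≤
          sval (Matrix.fromBlocks A11 A12 A21 A22) k :=
        le_sval _ _ hk _ fun B hB => sval_le _ _ _ (by omega)
      have e4 : |(A22 - A21 * A11⁻¹ * A12) i j| ≤
          sval (Matrix.fromBlocks A11 A12 A21 A22
              - Matrix.fromBlocks A11 A12 A21 (A21 * A11⁻¹ * A12)) 1 := by
        refine le_sval _ _ le_rfl _ fun B hB => ?_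
        have hB0 : B = 0 := eq_zero_of_rank B (by omega)
        have := entry_le_specNorm (Matrix.fromBlocks A11 A12 A21 A22
              - Matrix.fromBlocks A11 A12 A21 (A21 * A11⁻¹ * A12) - B) (Sum.inr i) (Sum.inr j)
        simpa [hB0] using this
      have e5 := sval_Ak_le A11 A12 A21 hinv ν (by linarith) h3a h3b a b
      have hμ0 : 0 < μ := by linarith
      have e6 : sval (Matrix.fromBlocks A11 A12 A21 A22) k ≤
          μ * sval (Matrix.fromBlocks A11 A12 A21 (A21 * A11⁻¹ * A12)) k := by
        rw [one_div, inv_mul_le_iff₀ hμ0] at e2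
        exact e2
      have e7 : |(A22 - A21 * A11⁻¹ * A12) i j| ≤
          μ ^ 2 * sval (Matrix.fromBlocks A11 A12 A21 (A21 * A11⁻¹ * A12)) k := by
        refine e4.trans (e1.trans ?_)
        rw [sq, mul_assoc]
        exact mul_le_mul_of_nonneg_left (e3.trans e6) hμ0.le
      refine (mul_le_mul_of_nonneg_right e7 (abs_nonneg _)).trans ?_
      rw [hK, mul_assoc, mul_assoc]
      exact mul_le_mul_of_nonneg_left e5 (by positivity)
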